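/- arXiv:1509.05739 — 6 statements merged into one kernel-verified Lean document; each statement's English description precedes it below -/
import Mathlib

section
/- Let n be a prime, m a divisor of n−1, A the unique subgroup of order m of (ℤ/nℤ)ˣ, ω = e^{2πi/n}, and κ := (n−1)/m. Then the coherence of the harmonic frame, namely μ := max over nonzero residues ℓ modulo n of (1/m)|Σ_{a ∈ A} ω^{ℓ a}|, satisfies μ ≤ (1/κ)·((κ−1)·√((1/m)(κ + 1/m)) + 1/m). -/
/-- `∑_{a ∈ A} ω^(ℓ·a)` with `ω = e^{2πi/n}`, for `A ≤ (ℤ/nℤ)ˣ` and `ℓ` a nonzero residue. -/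
noncomputable def harmonicSum (n : ℕ) [NeZero n] (A : Subgroup (ZMod n)ˣ) [Fintype A]
    (ℓ : (ZMod n)ˣ) : ℂ :=
  ∑ a : A, Complex.exp (2 * Real.pi * Complex.I / n) ^
      (((ℓ * (a : (ZMod n)ˣ) : (ZMod n)ˣ) : ZMod n)).val

lemma hs_eq (n : ℕ) [NeZero n] (A : Subgroup (ZMod n)ˣ) [Fintype A] (l : (ZMod n)ˣ) :
    harmonicSum n A l = ∑ a : A, ZMod.stdAddChar ((l : ZMod n) * ((a : (ZMod n)ˣ) : ZMod n)) := by
  unfold harmonicSum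
  refine Finset.sum_congr rfl fun a _ => ?_
  rw [ZMod.stdAddChar_apply, ZMod.toCircle_apply, ← Complex.exp_nat_mul, Units.val_mul]
  congr 1
  ring

lemma sum_units_char (n : ℕ) [Fact n.Prime] (t : ZMod n) :
    ∑ u : (ZMod n)ˣ, ZMod.stdAddChar ((u : ZMod n) * t) = (if t = 0 then (n : ℂ) else 0) - 1 := by
  have h := AddChar.sum_mulShift t (ZMod.isPrimitive_stdAddChar n)
  rw [ZMod.card] at h
  have h2 : ∑ x : ZMod n, ZMod.stdAddChar (x * t)
      = ZMod.stdAddChar ((0 : ZMod n) * t) + ∑ u : (ZMod n)ˣ, ZMod.stdAddChar ((u : ZMod n) * t) := by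
    rw [← Fintype.sum_subtype_add_sum_subtype (fun x : ZMod n => x = 0)]
    congr 1
    · refine Finset.sum_eq_single (⟨0, rfl⟩ : {x : ZMod n // x = 0})
        (fun x _ hx => absurd (Subtype.ext x.2) hx) (fun h => absurd (@Finset.mem_univ _ (_) _) h)
    · exact (Fintype.sum_equiv unitsEquivNeZero _ _ (fun u => rfl)).symm
  rw [h2] at h
  simp only [zero_mul, AddChar.map_zero_eq_one] at h
  split_ifs at h ⊢ <;> push_cast at h <;> linear_combination h

lemma hs_coset (n : ℕ) [NeZero n] (A : Subgroup (ZMod n)ˣ) [Fintype A] (l b : (ZMod n)ˣ)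
    (hb : b ∈ A) : harmonicSum n A (l * b) = harmonicSum n A l := by
  rw [hs_eq, hs_eq]
  refine Fintype.sum_equiv (Equiv.mulLeft (⟨b, hb⟩ : A)) _ _ fun a => ?_
  simp [mul_assoc]

lemma hs_sum (n : ℕ) [Fact n.Prime] (A : Subgroup (ZMod n)ˣ) [Fintype A] :
    ∑ u : (ZMod n)ˣ, harmonicSum n A u = -(Nat.card A : ℂ) := by
  simp only [hs_eq]
  rw [Finset.sum_comm]
  simp [sum_units_char]

lemma hs_sq (n : ℕ) [Fact n.Prime] (A : Subgroup (ZMod n)ˣ) [Fintype A] :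
    ∑ u : (ZMod n)ˣ, ‖harmonicSum n A u‖ ^ 2 = (Nat.card A : ℝ) * (n - Nat.card A) := by
  classical
  have key : ∑ u : (ZMod n)ˣ, harmonicSum n A u * (starRingEnd ℂ) (harmonicSum n A u)
      = (Nat.card A : ℂ) * (n - Nat.card A) := by
    have h1 : ∀ u : (ZMod n)ˣ, harmonicSum n A u * (starRingEnd ℂ) (harmonicSum n A u)
        = ∑ a : A, ∑ b : A, ZMod.stdAddChar ((u : ZMod n) *
          (((a : (ZMod n)ˣ) : ZMod n) - ((b : (ZMod n)ˣ) : ZMod n))) := by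
      intro u
      rw [hs_eq, map_sum, Finset.sum_mul_sum]
      refine Finset.sum_congr rfl fun a _ => Finset.sum_congr rfl fun b _ => ?_
      rw [← AddChar.map_neg_eq_conj, ← AddChar.map_add_eq_mul]
      congr 1
      ring
    simp only [h1]
    rw [Finset.sum_comm]
    have h2 : ∀ a : A, ∑ u : (ZMod n)ˣ, ∑ b : A, ZMod.stdAddChar ((u : ZMod n) *
          (((a : (ZMod n)ˣ) : ZMod n) - ((b : (ZMod n)ˣ) : ZMod n))) = (n : ℂ) - Nat.card A := by
      intro a
      rw [Finset.sum_comm]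
      simp only [sum_units_char, sub_eq_zero, Units.val_inj, Subtype.coe_inj]
      simp [Finset.sum_sub_distrib]
    simp [h2]
    ring
  simp only [Complex.mul_conj, Complex.normSq_eq_norm_sq] at key
  exact_mod_cast key

/-- Theorem 4 (general `κ`). Let `n` be prime, `m` a divisor of `n-1` with `κ = (n-1)/m`,
and `A` the unique subgroup of `(ℤ/nℤ)ˣ` of order `m`. The coherence of the harmonic frame,
`μ = max_{ℓ ≠ 0} (1/m)|∑_{a ∈ A} ω^{ℓa}|`, satisfies
`μ ≤ (1/κ)((κ-1)√((1/m)(κ + 1/m)) + 1/m)`. -/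
theorem harmonic_frame_coherence_bound (n m κ : ℕ) [NeZero n] (hn : n.Prime)
    (hκ : m * κ = n - 1) (A : Subgroup (ZMod n)ˣ) [Fintype A] (hA : Nat.card A = m) :
    ∀ ℓ : (ZMod n)ˣ,
      (1 / (m : ℝ)) * ‖harmonicSum n A ℓ‖ ≤
        (1 / (κ : ℝ)) * (((κ : ℝ) - 1) *
            Real.sqrt ((1 / (m : ℝ)) * ((κ : ℝ) + 1 / (m : ℝ))) + 1 / (m : ℝ)) := by
  classical
  intro l
  have : Fact n.Prime := ⟨hn⟩
  have hn2 := hn.two_le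
  have hpos : 0 < m * κ := by omega
  have hm : 0 < m := Nat.pos_of_mul_pos_right hpos
  have hk : 0 < κ := Nat.pos_of_mul_pos_left hpos
  have hmR : (0 : ℝ) < m := by exact_mod_cast hm
  have hkR : (0 : ℝ) < κ := by exact_mod_cast hk
  have hk1 : (1 : ℝ) ≤ κ := by exact_mod_cast hk
  have hnN : m * κ + 1 = n := by omega
  have hnR : (n : ℝ) = m * κ + 1 := by exact_mod_cast hnN.symm
  have hcard : Fintype.card (ZMod n)ˣ = m * κ := by
    rw [ZMod.card_units_eq_totient, Nat.totient_prime hn, hκ]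
  have hkC : (κ : ℂ) ≠ 0 := by exact_mod_cast hk.ne'
  set f := harmonicSum n A with hf
  have hsum : ∑ u : (ZMod n)ˣ, f u = -(m : ℂ) := by rw [hf, hs_sum, hA]
  have hsq : ∑ u : (ZMod n)ˣ, ‖f u‖ ^ 2 = (m : ℝ) * (n - m) := by rw [hf, hs_sq, hA]
  have hAfilter : (Finset.univ.filter (fun u : (ZMod n)ˣ => u ∈ A)).card = m := by
    rw [← hA, Nat.card_eq_fintype_card, ← Fintype.card_subtype]
  let c : (ZMod n)ˣ → ℝ := fun u => (if u ∈ A then 1 else 0) - 1 / κ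
  let y : (ZMod n)ˣ → ℂ := fun u => f u + 1 / κ
  have hy0 : ∑ u, y u = 0 := by
    simp only [y, Finset.sum_add_distrib, hsum, Finset.sum_const, Finset.card_univ, hcard,
      nsmul_eq_mul]
    push_cast
    field_simp
    ring
  have hy2 : ∑ u, ‖y u‖ ^ 2 = (m : ℝ) * (n - m - 1 / κ) := by
    have h1 : ∀ u, ‖y u‖ ^ 2 = ‖f u‖ ^ 2 + (2 / κ) * (f u).re + 1 / κ ^ 2 := by
      intro u
      have : y u = f u + ((1 / κ : ℝ) : ℂ) := by simp [y]
      rw [this, ← Complex.normSq_eq_norm_sq, ← Complex.normSq_eq_norm_sq, Complex.normSq_apply,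
        Complex.normSq_apply, Complex.add_re, Complex.add_im, Complex.ofReal_re, Complex.ofReal_im]
      ring
    have h2 : ∑ u, (f u).re = -(m : ℝ) := by
      rw [← Complex.re_sum, hsum]; simp
    simp only [h1, Finset.sum_add_distrib, ← Finset.mul_sum, h2, hsq, Finset.sum_const,
      Finset.card_univ, hcard, nsmul_eq_mul]
    push_cast
    field_simp
    ring
  have hc2 : ∑ u, c u ^ 2 = (m : ℝ) * (1 - 1 / κ) := by
    have h1 : ∀ u, c u ^ 2 = (1 - 2 / κ) * (if u ∈ A then 1 else 0) + 1 / κ ^ 2 := by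
      intro u
      simp only [c]
      split_ifs <;> ring
    simp only [h1, Finset.sum_add_distrib, ← Finset.mul_sum, Finset.sum_boole, hAfilter,
      Finset.sum_const, Finset.card_univ, hcard, nsmul_eq_mul]
    push_cast
    field_simp
    ring
  have hcy : ∑ u, (c u : ℂ) * y (l * u) = m * y l := by
    have h1 : ∀ u, (c u : ℂ) * y (l * u) = (if u ∈ A then y l else 0) - 1 / κ * y (l * u) := by
      intro u
      simp only [c]
      split_ifs with h
      · have : y (l * u) = y l := by simp only [y, hf, hs_coset n A l u h]
        rw [this]; push_cast; ring
      · push_cast; ring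
    have h2 : ∑ u, y (l * u) = 0 := by
      rw [← hy0]; exact Fintype.sum_equiv (Equiv.mulLeft l) _ _ (fun u => rfl)
    simp only [h1, Finset.sum_sub_distrib, ← Finset.mul_sum, h2, ← Finset.sum_filter,
      Finset.sum_const, hAfilter, nsmul_eq_mul]
    ring
  have hy2' : ∑ u, ‖y (l * u)‖ ^ 2 = (m : ℝ) * (n - m - 1 / κ) := by
    rw [← hy2]; exact Fintype.sum_equiv (Equiv.mulLeft l) _ _ (fun u => rfl)
  have hCS : (m * ‖y l‖) ^ 2 ≤ (m * (1 - 1 / κ)) * (m * (n - m - 1 / κ)) := by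
    calc (m * ‖y l‖) ^ 2 = ‖∑ u, (c u : ℂ) * y (l * u)‖ ^ 2 := by rw [hcy]; simp
      _ ≤ (∑ u, |c u| * ‖y (l * u)‖) ^ 2 := by
        gcongr
        refine (norm_sum_le _ _).trans (le_of_eq ?_)
        simp
      _ ≤ (∑ u, |c u| ^ 2) * ∑ u, ‖y (l * u)‖ ^ 2 := Finset.sum_mul_sq_le_sq_mul_sq _ _ _
      _ = _ := by simp only [sq_abs, hc2, hy2']
  have hyl : ‖y l‖ ≤ (1 - 1 / κ) * √n := by
    have h0 : (0 : ℝ) ≤ 1 - 1 / κ := by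
      rw [sub_nonneg, div_le_one hkR]; exact hk1
    refine (pow_le_pow_iff_left₀ (norm_nonneg _) (by positivity) two_ne_zero).1 ?_
    rw [mul_pow, Real.sq_sqrt (by positivity)]
    have : (m * (1 - 1 / κ)) * (m * (n - m - 1 / κ)) = (m : ℝ) ^ 2 * ((1 - 1 / κ) ^ 2 * n) := by
      rw [hnR]; field_simp; ring
    rw [this, mul_pow] at hCS
    exact le_of_mul_le_mul_left hCS (by positivity)
  have hfl : ‖f l‖ ≤ (1 - 1 / κ) * √n + 1 / κ := by
    have : f l = y l - 1 / κ := by simp [y]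
    rw [this]
    refine (norm_sub_le _ _).trans ?_
    have : ‖(1 / κ : ℂ)‖ = 1 / κ := by simp
    rw [this]; linarith
  have hs : √((1 / (m : ℝ)) * ((κ : ℝ) + 1 / (m : ℝ))) = √n / m := by
    rw [show (1 / (m : ℝ)) * ((κ : ℝ) + 1 / (m : ℝ)) = n / m ^ 2 by rw [hnR]; field_simp,
      Real.sqrt_div (by positivity), Real.sqrt_sq hmR.le]
  rw [hs]
  calc (1 / (m : ℝ)) * ‖f l‖ ≤ (1 / (m : ℝ)) * ((1 - 1 / κ) * √n + 1 / κ) := by gcongr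
    _ = _ := by field_simp
end

section
/- Let G be a finite group of order n, ρ an irreducible complex representation of G of degree d with character χ, H a subgroup of Aut(G), K := {σ ∈ H : χ∘σ = χ}, and A = {a_1,...,a_m} a subgroup of H of order m such that the set product KA is a subgroup of H, A ∩ K = {1}, and the characters χ∘a for a ∈ A are pairwise distinct. Let {h_i}_{i=1}^{n_c} be representatives of the right cosets of KA in H, and let {g_j}_{j=1}^{n_o} be representatives of the orbits of G under the action of H. Then: (a) for every g ∈ G with g = h(g_j) for some h in the coset KAh_i, one has Σ_{a∈A} χ(a(g)) = Σ_{a∈A} χ(a(h_i(g_j))), so there are at most n_c(n_o − 1) distinct values among {Σ_{a∈A} χ(a(g)) : g ∈ G, g ≠ 1}; and (b) max over nonidentity g ∈ G of |Σ_{a∈A} χ(a(g))|² is at most (m·n − m²d²) / min_{(i,j) : g_j ≠ 1} |KAh_i(g_j)|, where KAh_i(g_j) := {k(a(h_i(g_j))) : k ∈ K, a ∈ A}. -/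
open scoped Pointwise

open scoped ComplexOrder in
/-- The character value at the inverse is the complex conjugate. -/
lemma aux_char_inv {G V : Type*} [Group G] [Fintype G] [AddCommGroup V] [Module ℂ V]
    [FiniteDimensional ℂ V] (ρ : Representation ℂ G V) (x : G) :
    (starRingEnd ℂ) (LinearMap.trace ℂ V (ρ x)) = LinearMap.trace ℂ V (ρ x⁻¹) := by
  classical
  let b := Module.finBasis ℂ V
  let M : G → Matrix (Fin (Module.finrank ℂ V)) (Fin (Module.finrank ℂ V)) ℂ :=
    fun g => LinearMap.toMatrix b b (ρ g)
  have hM1 : M 1 = 1 := by simp [M]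
  have hMm : ∀ g k, M (g * k) = M g * M k := by
    intro g k
    simp [M, map_mul, LinearMap.toMatrix_mul]
  have htr : ∀ g, LinearMap.trace ℂ V (ρ g) = (M g).trace := fun g =>
    LinearMap.trace_eq_matrix_trace ℂ b (ρ g)
  have hinj : ∀ g, Function.Injective (M g).mulVec := by
    intro g
    apply Function.LeftInverse.injective (g := (M g⁻¹).mulVec)
    intro v
    rw [Matrix.mulVec_mulVec, ← hMm, inv_mul_cancel, hM1, Matrix.one_mulVec]
  let P := ∑ g : G, (M g).conjTranspose * M g
  have hP : P.PosDef := Matrix.posDef_sum Finset.univ_nonempty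
    (fun g _ => Matrix.PosDef.conjTranspose_mul_self (M g) (hinj g))
  have hinv : (M x).conjTranspose * P * M x = P := by
    simp only [P]
    rw [Finset.mul_sum, Finset.sum_mul]
    rw [← Equiv.sum_comp (Equiv.mulRight x) (fun g => (M g).conjTranspose * M g)]
    refine Finset.sum_congr rfl fun g _ => ?_
    simp only [Equiv.coe_mulRight, hMm, Matrix.conjTranspose_mul, Matrix.mul_assoc]
  have hinv2 : (M x).conjTranspose * P = P * M x⁻¹ := by
    conv_rhs => rw [← hinv, Matrix.mul_assoc, ← hMm, mul_inv_cancel, hM1, Matrix.mul_one]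
  have hu : IsUnit P.det := (Matrix.isUnit_iff_isUnit_det _).1 hP.isUnit
  rw [htr, htr, starRingEnd_apply, ← Matrix.trace_conjTranspose]
  calc (M x).conjTranspose.trace = ((M x).conjTranspose * P * P⁻¹).trace := by
        rw [Matrix.mul_nonsing_inv_cancel_right _ _ hu]
    _ = (M x⁻¹).trace := by
        rw [hinv2, Matrix.trace_mul_comm, ← Matrix.mul_assoc, Matrix.nonsing_inv_mul _ hu,
          Matrix.one_mul]

/-- Irreducibility is preserved by twisting with an automorphism. -/
lemma aux_irr {G V : Type*} [Group G] [AddCommGroup V] [Module ℂ V] [Nontrivial V]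
    (ρ : Representation ℂ G V)
    (hirr : ∀ W : Submodule ℂ V, (∀ g : G, ∀ v ∈ W, ρ g v ∈ W) → W = ⊥ ∨ W = ⊤)
    (a : MulAut G) :
    Representation.IsIrreducible (ρ.comp a.toMonoidHom : Representation ℂ G V) := by
  have hne : (⊥ : Subrepresentation (ρ.comp a.toMonoidHom : Representation ℂ G V)) ≠ ⊤ := by
    intro h
    have := congrArg Subrepresentation.toSubmodule h
    exact bot_ne_top (α := Submodule ℂ V) this
  exact
    { exists_pair_ne := ⟨_, _, hne⟩
      eq_bot_or_eq_top := by
        intro W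
        rcases hirr W.toSubmodule (fun g v hv => by
          have := W.apply_mem_toSubmodule (a.symm g) hv
          simpa using this) with h | h
        · left; exact Subrepresentation.toSubmodule_injective h
        · right; exact Subrepresentation.toSubmodule_injective h }

/-- Second moment of the sum of the twisted characters. -/
lemma aux_sum_sq {G V : Type*} [Group G] [Fintype G] [AddCommGroup V] [Module ℂ V]
    [FiniteDimensional ℂ V] [Nontrivial V]
    (ρ : Representation ℂ G V)
    (hirr : ∀ W : Submodule ℂ V, (∀ g : G, ∀ v ∈ W, ρ g v ∈ W) → W = ⊥ ∨ W = ⊤)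
    (χ : G → ℂ) (hχ : ∀ g : G, χ g = LinearMap.trace ℂ V (ρ g))
    (A : Subgroup (MulAut G)) [Fintype A]
    (hdistinct : ∀ a₁ a₂ : MulAut G, a₁ ∈ A → a₂ ∈ A →
      (∀ g : G, χ (a₁ g) = χ (a₂ g)) → a₁ = a₂) :
    ∑ g : G, ‖∑ a : A, χ ((a : MulAut G) g)‖ ^ 2 = (Nat.card A : ℝ) * Fintype.card G := by
  classical
  have hcard : (Nat.card G : ℂ) ≠ 0 := by exact_mod_cast Nat.card_pos.ne'
  have : Invertible (Nat.card G : ℂ) := invertibleOfNonzero hcard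
  have horth : ∀ a b : A, ∑ g : G, χ ((a : MulAut G) g) * (starRingEnd ℂ) (χ ((b : MulAut G) g))
      = if a = b then (Nat.card G : ℂ) else 0 := by
    intro a b
    have := aux_irr ρ hirr (a : MulAut G)
    have := aux_irr ρ hirr (b : MulAut G)
    have h := Representation.char_orthonormal
      (ρ.comp (a : MulAut G).toMonoidHom : Representation ℂ G V)
      (ρ.comp (b : MulAut G).toMonoidHom : Representation ℂ G V)
    have e : ∑ g : G, χ ((a : MulAut G) g) * (starRingEnd ℂ) (χ ((b : MulAut G) g)) =
        ∑ g : G, (Representation.character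
          (ρ.comp (a : MulAut G).toMonoidHom : Representation ℂ G V)) g *
        (Representation.character
          (ρ.comp (b : MulAut G).toMonoidHom : Representation ℂ G V)) g⁻¹ := by
      refine Finset.sum_congr rfl fun g _ => ?_
      rw [hχ, hχ, aux_char_inv, ← map_inv]
      rfl
    rw [e]
    rw [inv_mul_eq_iff_eq_mul₀ hcard] at h
    rw [h]
    by_cases hab : a = b
    · subst hab
      rw [if_pos ⟨Representation.Equiv.refl _⟩]
      simp
    · rw [if_neg, if_neg hab, mul_zero]
      rintro ⟨φ⟩
      apply hab
      apply Subtype.ext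
      apply hdistinct _ _ a.2 b.2
      intro g
      have := congrFun (Representation.char_iso φ) g
      rw [hχ, hχ]
      exact this.symm
  have key : ((∑ g : G, ‖∑ a : A, χ ((a : MulAut G) g)‖ ^ 2 : ℝ) : ℂ)
      = (Nat.card A : ℂ) * Fintype.card G := by
    push_cast
    calc ∑ g : G, ((‖∑ a : A, χ ((a : MulAut G) g)‖ : ℂ)) ^ 2
        = ∑ g : G, ∑ a : A, ∑ b : A,
            χ ((a : MulAut G) g) * (starRingEnd ℂ) (χ ((b : MulAut G) g)) := by
          refine Finset.sum_congr rfl fun g _ => ?_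
          rw [← Complex.mul_conj', map_sum, Finset.sum_mul_sum]
      _ = ∑ a : A, ∑ b : A, ∑ g : G,
            χ ((a : MulAut G) g) * (starRingEnd ℂ) (χ ((b : MulAut G) g)) := by
          rw [Finset.sum_comm]
          refine Finset.sum_congr rfl fun a _ => ?_
          rw [Finset.sum_comm]
      _ = _ := by
          simp [horth]
  exact_mod_cast key

/-- Theorem 8. Let `G` be a finite group of order `n`, `ρ` a degree-`d` irreducible complex
representation of `G` with character `χ`, `H ≤ Aut(G)`, `K` the subgroup of `H` fixing `χ`,
and `A ≤ H` of order `m` with `KA` a subgroup, `A ⊓ K = ⊥`, and the characters `χ ∘ a`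
(`a ∈ A`) pairwise distinct. With `{h i}` representatives of the right cosets of `KA` in `H`
and `{gr j}` representatives of the orbits of `G` under `H`:
(a) the sum `∑_{a ∈ A} χ(a(g))` depends only on the pair `(i, j)` with `g ∈ KAh_i(g_j)`,
so at most `n_c (n_o - 1)` distinct values arise for `g ≠ 1`; and
(b) `max_{g ≠ 1} |∑_{a ∈ A} χ(a(g))|² ≤ (mn - m²d²) / min_{(i,j), g_j ≠ 1} |KAh_i(g_j)|`. -/
theorem group_frame_inner_product_values_and_bound
    (G : Type*) [Group G] [Fintype G]
    (n : ℕ) (hn : Fintype.card G = n)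
    (V : Type*) [AddCommGroup V] [Module ℂ V] [FiniteDimensional ℂ V]
    (d : ℕ) (hd : Module.finrank ℂ V = d)
    (ρ : Representation ℂ G V)
    (hirr : ∀ W : Submodule ℂ V, (∀ g : G, ∀ v ∈ W, ρ g v ∈ W) → W = ⊥ ∨ W = ⊤)
    (χ : G → ℂ) (hχ : ∀ g : G, χ g = LinearMap.trace ℂ V (ρ g))
    (H K A : Subgroup (MulAut G)) (hAH : A ≤ H) [Fintype A]
    (m : ℕ) (hm : Nat.card A = m)
    (hK : ∀ σ : MulAut G, σ ∈ K ↔ σ ∈ H ∧ ∀ g : G, χ (σ g) = χ g)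
    (hKA : ∃ J : Subgroup (MulAut G),
      (J : Set (MulAut G)) = (K : Set (MulAut G)) * (A : Set (MulAut G)))
    (hAK : A ⊓ K = ⊥)
    (hdistinct : ∀ a₁ a₂ : MulAut G, a₁ ∈ A → a₂ ∈ A →
      (∀ g : G, χ (a₁ g) = χ (a₂ g)) → a₁ = a₂)
    (n_c n_o : ℕ)
    (h : Fin n_c → MulAut G) (hh : ∀ i, h i ∈ H)
    (hcosets : ∀ σ ∈ H, ∃! i : Fin n_c,
      σ * (h i)⁻¹ ∈ (K : Set (MulAut G)) * (A : Set (MulAut G)))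
    (gr : Fin n_o → G)
    (horbits : ∀ g : G, ∃! j : Fin n_o, ∃ τ ∈ H, τ (gr j) = g)
    (N : ℕ)
    (hN : IsLeast {c : ℕ | ∃ (i : Fin n_c) (j : Fin n_o), gr j ≠ 1 ∧
      c = Set.ncard {y : G | ∃ k ∈ K, ∃ a ∈ A, k ((a : MulAut G) ((h i) (gr j))) = y}} N) :
    (∀ (g : G) (i : Fin n_c) (j : Fin n_o) (τ : MulAut G), τ ∈ H →
        τ * (h i)⁻¹ ∈ (K : Set (MulAut G)) * (A : Set (MulAut G)) →
        τ (gr j) = g →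
        ∑ a : A, χ ((a : MulAut G) g) = ∑ a : A, χ ((a : MulAut G) ((h i) (gr j)))) ∧
    Set.ncard {x : ℂ | ∃ g : G, g ≠ 1 ∧ x = ∑ a : A, χ ((a : MulAut G) g)}
      ≤ n_c * (n_o - 1) ∧
    (∀ g : G, g ≠ 1 →
      ‖∑ a : A, χ ((a : MulAut G) g)‖ ^ 2
        ≤ ((m : ℝ) * n - (m : ℝ) ^ 2 * (d : ℝ) ^ 2) / (N : ℝ)) := by
  classical
  -- invariance of the sum under `KA`
  have hinv : ∀ σ ∈ (K : Set (MulAut G)) * (A : Set (MulAut G)), ∀ x : G,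
      ∑ a : A, χ ((a : MulAut G) (σ x)) = ∑ a : A, χ ((a : MulAut G) x) := by
    obtain ⟨J, hJ⟩ := hKA
    intro σ hσ x
    have hdec : ∀ b : A, ∃ a' : A, ∃ k ∈ K, (b : MulAut G) * σ = k * (a' : MulAut G) := by
      intro b
      have hb : (b : MulAut G) ∈ J := by
        rw [← SetLike.mem_coe, hJ]
        exact Set.mem_mul.2 ⟨1, K.one_mem, b, b.2, one_mul _⟩
      have hσ' : σ ∈ J := by rw [← SetLike.mem_coe, hJ]; exact hσ
      have := J.mul_mem hb hσ'
      rw [← SetLike.mem_coe, hJ] at this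
      obtain ⟨k, hk, a, ha, hka⟩ := Set.mem_mul.1 this
      exact ⟨⟨a, ha⟩, k, hk, hka.symm⟩
    choose f k hk hf using hdec
    have hinj : Function.Injective f := by
      intro b c hbc
      have h1 := hf b
      have h2 := hf c
      rw [hbc] at h1
      have h3 : (b : MulAut G) * (c : MulAut G)⁻¹ = k b * (k c)⁻¹ := by
        have e1 : (b : MulAut G) = k b * (f c : MulAut G) * σ⁻¹ := by rw [← h1]; group
        have e2 : (c : MulAut G) = k c * (f c : MulAut G) * σ⁻¹ := by rw [← h2]; group
        rw [e1, e2]; group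
      have h4 : (b : MulAut G) * (c : MulAut G)⁻¹ ∈ A ⊓ K := by
        refine Subgroup.mem_inf.2 ⟨A.mul_mem b.2 (A.inv_mem c.2), ?_⟩
        rw [h3]
        exact K.mul_mem (hk b) (K.inv_mem (hk c))
      rw [hAK, Subgroup.mem_bot] at h4
      exact Subtype.ext (mul_inv_eq_one.1 h4)
    have hbij : Function.Bijective f := Finite.injective_iff_bijective.1 hinj
    rw [← hbij.sum_comp (fun a : A => χ ((a : MulAut G) x))]
    refine Finset.sum_congr rfl fun b _ => ?_
    have : (b : MulAut G) (σ x) = k b ((f b : MulAut G) x) := by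
      rw [← MulAut.mul_apply, hf b, MulAut.mul_apply]
    rw [this]
    exact ((hK _).1 (hk b)).2 _
  have hdecomp : ∀ g : G, g ≠ 1 → ∃ i j, gr j ≠ 1 ∧
      ∃ σ ∈ (K : Set (MulAut G)) * (A : Set (MulAut G)), g = σ (h i (gr j)) := by
    intro g hg
    obtain ⟨j, ⟨τ, hτ, hj⟩, -⟩ := horbits g
    obtain ⟨i, hi, -⟩ := hcosets τ hτ
    refine ⟨i, j, ?_, τ * (h i)⁻¹, hi, ?_⟩
    · intro h1
      rw [h1, map_one] at hj
      exact hg hj.symm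
    · rw [← MulAut.mul_apply, inv_mul_cancel_right, hj]
  refine ⟨?_, ?_, ?_⟩
  · intro g i j τ _ hτ hg
    rw [← hinv _ hτ (h i (gr j)), ← MulAut.mul_apply, inv_mul_cancel_right, hg]
  · obtain ⟨j0, ⟨τ, -, hj0⟩, -⟩ := horbits 1
    have hj0' : gr j0 = 1 := by simpa using hj0
    let F : Finset ℂ := ((Finset.univ : Finset (Fin n_c)) ×ˢ (Finset.univ.erase j0)).image
      (fun p => ∑ a : A, χ ((a : MulAut G) (h p.1 (gr p.2))))
    have hsub : {x : ℂ | ∃ g : G, g ≠ 1 ∧ x = ∑ a : A, χ ((a : MulAut G) g)} ⊆ (F : Set ℂ) := by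
      rintro x ⟨g, hg, rfl⟩
      obtain ⟨i, j, hj, σ, hσ, rfl⟩ := hdecomp g hg
      rw [hinv σ hσ]
      refine Finset.mem_coe.2 (Finset.mem_image.2 ⟨(i, j), ?_, rfl⟩)
      simp only [Finset.mem_product, Finset.mem_univ, Finset.mem_erase, true_and, and_true]
      rintro rfl
      exact hj hj0'
    calc _ ≤ (F : Set ℂ).ncard := Set.ncard_le_ncard hsub F.finite_toSet
      _ = F.card := Set.ncard_coe_finset F
      _ ≤ _ := Finset.card_image_le
      _ = n_c * (n_o - 1) := by
        rw [Finset.card_product, Finset.card_erase_of_mem (Finset.mem_univ _)]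
        simp
  · intro g hg
    rcases subsingleton_or_nontrivial V with hV | hV
    · have hz : ∀ x, χ x = 0 := by
        intro x
        rw [hχ, Subsingleton.elim (ρ x) 0, map_zero]
      have hd0 : d = 0 := by rw [← hd]; exact Module.finrank_zero_of_subsingleton
      simp only [hz, hd0]
      simp
      positivity
    · obtain ⟨i, j, hj, σ, hσ, hgσ⟩ := hdecomp g hg
      have hpos : 0 < N := by
        obtain ⟨⟨i', j', -, hN'⟩, -⟩ := hN
        rw [hN', Set.ncard_pos (Set.toFinite _)]
        exact ⟨_, 1, K.one_mem, 1, A.one_mem, rfl⟩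
      have hle : N ≤ Set.ncard
          {y : G | ∃ k ∈ K, ∃ a ∈ A, k ((a : MulAut G) ((h i) (gr j))) = y} :=
        hN.2 ⟨i, j, hj, rfl⟩
      set Y := {y : G | ∃ k ∈ K, ∃ a ∈ A, k ((a : MulAut G) ((h i) (gr j))) = y} with hY
      have hYS : ∀ y ∈ Y, ∑ a : A, χ ((a : MulAut G) y) = ∑ a : A, χ ((a : MulAut G) g) := by
        rintro y ⟨k, hk, a, ha, rfl⟩
        rw [hgσ, hinv σ hσ, ← hinv (k * a) (Set.mul_mem_mul hk ha) (h i (gr j)), MulAut.mul_apply]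
      have hY1 : (1 : G) ∉ Y := by
        rintro ⟨k, hk, a, ha, h1⟩
        apply hj
        simpa using h1
      have hsum := aux_sum_sq ρ hirr χ hχ A hdistinct
      rw [hm, hn] at hsum
      have hone : ‖∑ a : A, χ ((a : MulAut G) 1)‖ ^ 2 = (m : ℝ) ^ 2 * (d : ℝ) ^ 2 := by
        have : ∀ a : A, χ ((a : MulAut G) 1) = d := by
          intro a
          rw [map_one, hχ, map_one, LinearMap.trace_one, hd]
        simp only [this]
        rw [Finset.sum_const, Finset.card_univ, ← Nat.card_eq_fintype_card, hm]
        simp [mul_pow]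
      rw [le_div_iff₀ (by exact_mod_cast hpos)]
      have hsub : ∑ y ∈ insert 1 Y.toFinset, ‖∑ a : A, χ ((a : MulAut G) y)‖ ^ 2 ≤
          ∑ y : G, ‖∑ a : A, χ ((a : MulAut G) y)‖ ^ 2 :=
        Finset.sum_le_sum_of_subset_of_nonneg (Finset.subset_univ _)
          (fun _ _ _ => by positivity)
      rw [Finset.sum_insert (by simpa using hY1), hone, hsum,
        Finset.sum_congr rfl (fun y hy => by rw [hYS y (Set.mem_toFinset.1 hy)]),
        Finset.sum_const, nsmul_eq_mul, ← Set.ncard_eq_toFinset_card'] at hsub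
      have hle' : (N : ℝ) ≤ (Y.ncard : ℝ) := by exact_mod_cast hle
      have := mul_le_mul_of_nonneg_right hle'
        (by positivity : (0:ℝ) ≤ ‖∑ a : A, χ ((a : MulAut G) g)‖ ^ 2)
      linarith
end

section
/- Let p be a prime, r a positive integer, n = p^r, m a divisor of n−1, A the unique subgroup of order m of the multiplicative group 𝔽_{p^r}ˣ, ω = e^{2πi/p}, Tr : 𝔽_{p^r} → 𝔽_p the field trace, and κ := (n−1)/m. Then the coherence μ := max over nonzero x ∈ 𝔽_{p^r} of (1/m)|Σ_{a ∈ A} ω^{Tr(a x)}| satisfies μ ≤ (1/κ)·((κ−1)·√((1/m)(κ + 1/m)) + 1/m). -/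
/-- `∑_{a ∈ A} ω^{Tr(a·z)}` with `ω = e^{2πi/p}`, for a subgroup `A` of the group of units
of the finite field `F` of characteristic `p`, where `Tr` is the field trace to `𝔽_p`. -/
noncomputable def traceCharSum (p : ℕ) (F : Type*) [Field F] [Algebra (ZMod p) F]
    (A : Subgroup Fˣ) [Fintype A] (z : F) : ℂ :=
  ∑ a : A, Complex.exp (2 * Real.pi * Complex.I / p) ^
      (Algebra.trace (ZMod p) F (((a : Fˣ) : F) * z)).val

/-- The additive character `x ↦ ω^{Tr x}`. -/
noncomputable def trChar (p : ℕ) [Fact p.Prime] (F : Type*) [Field F] [Algebra (ZMod p) F] :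
    AddChar F ℂ :=
  (ZMod.stdAddChar (N := p)).compAddMonoidHom (Algebra.trace (ZMod p) F).toAddMonoidHom

theorem trChar_apply (p : ℕ) [Fact p.Prime] (F : Type*) [Field F] [Algebra (ZMod p) F] (x : F) :
    Complex.exp (2 * Real.pi * Complex.I / p) ^ (Algebra.trace (ZMod p) F x).val
      = trChar p F x := by
  rw [← Complex.exp_nat_mul]
  have h := ZMod.stdAddChar_coe (N := p) ((Algebra.trace (ZMod p) F x).val : ℤ)
  have h2 : (((Algebra.trace (ZMod p) F x).val : ℤ) : ZMod p) = Algebra.trace (ZMod p) F x := by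
    simp
  rw [h2] at h
  have h3 : trChar p F x = ZMod.stdAddChar (Algebra.trace (ZMod p) F x) := rfl
  rw [h3, h]
  congr 1
  push_cast
  ring

theorem trChar_primitive (p : ℕ) [Fact p.Prime] (F : Type*) [Field F] [Fintype F]
    [Algebra (ZMod p) F] : (trChar p F).IsPrimitive := by
  apply AddChar.IsPrimitive.of_ne_one
  intro h
  obtain ⟨x, hx⟩ := Algebra.trace_surjective (ZMod p) F 1
  have h1 : trChar p F x = 1 := by rw [h]; rfl
  have h3 : trChar p F x = ZMod.stdAddChar (Algebra.trace (ZMod p) F x) := rfl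
  rw [h3, hx, ← (ZMod.stdAddChar (N := p)).map_zero_eq_one] at h1
  exact one_ne_zero (ZMod.injective_stdAddChar h1)

section
variable (p : ℕ) [Fact p.Prime] (F : Type*) [Field F] [Fintype F] [Algebra (ZMod p) F]
  (A : Subgroup Fˣ) [Fintype A]

theorem tcs_eq (z : F) : traceCharSum p F A z = ∑ a : A, trChar p F (z * ((a : Fˣ) : F)) := by
  unfold traceCharSum
  refine Finset.sum_congr rfl fun a _ => ?_
  rw [trChar_apply, mul_comm]

theorem tcs_zero : traceCharSum p F A 0 = Fintype.card A := by
  rw [tcs_eq]; simp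

theorem tcs_smul (z : F) (b : A) :
    traceCharSum p F A (((b : Fˣ) : F) * z) = traceCharSum p F A z := by
  rw [tcs_eq, tcs_eq]
  refine Fintype.sum_equiv (Equiv.mulLeft b) _ _ fun a => ?_
  congr 1
  simp
  ring

theorem tcs_sum : ∑ z : F, traceCharSum p F A z = 0 := by
  classical
  simp_rw [tcs_eq]
  rw [Finset.sum_comm]
  refine Finset.sum_eq_zero fun a _ => ?_
  rw [AddChar.sum_mulShift _ (trChar_primitive p F)]
  simp

theorem tcs_sq : ∑ z : F, ‖traceCharSum p F A z‖ ^ 2 = (Fintype.card F : ℝ) * Fintype.card A := by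
  classical
  have key : ∑ z : F, traceCharSum p F A z * (starRingEnd ℂ) (traceCharSum p F A z)
      = (Fintype.card F : ℂ) * Fintype.card A := by
    have h1 : ∀ z : F, traceCharSum p F A z * (starRingEnd ℂ) (traceCharSum p F A z)
        = ∑ a : A, ∑ b : A, trChar p F (z * (((a : Fˣ) : F) - ((b : Fˣ) : F))) := by
      intro z
      rw [tcs_eq, map_sum, Finset.sum_mul_sum]
      refine Finset.sum_congr rfl fun a _ => Finset.sum_congr rfl fun b _ => ?_
      rw [← AddChar.map_neg_eq_conj, ← AddChar.map_add_eq_mul]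
      congr 1
      ring
    simp_rw [h1]
    rw [Finset.sum_comm]
    have h2 : ∀ a : A, ∑ z : F, ∑ b : A, trChar p F (z * (((a : Fˣ) : F) - ((b : Fˣ) : F)))
        = (Fintype.card F : ℂ) := by
      intro a
      rw [Finset.sum_comm, Finset.sum_eq_single a]
      · rw [AddChar.sum_mulShift _ (trChar_primitive p F)]
        simp
      · intro b _ hb
        rw [AddChar.sum_mulShift _ (trChar_primitive p F), if_neg]
        · simp
        · intro h
          apply hb
          exact Subtype.ext (Units.ext (sub_eq_zero.mp h).symm)
      · simp
    simp_rw [h2]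
    simp [mul_comm]
  simp_rw [Complex.mul_conj, Complex.normSq_eq_norm_sq] at key
  exact_mod_cast key

/-- The main Cauchy-Schwarz inequality. -/
theorem tcs_main (x : F) (hx : x ≠ 0) :
    (Fintype.card A : ℝ) ^ 2 * ‖1 + traceCharSum p F A x‖ ^ 2 ≤
      ((Fintype.card F : ℝ) - 1 - Fintype.card A) *
        ((Fintype.card F : ℝ) * Fintype.card A - (Fintype.card A : ℝ) ^ 2
          - Fintype.card A * ‖traceCharSum p F A x‖ ^ 2) := by
  classical
  set S := traceCharSum p F A with hS
  let f : A → F := fun a => ((a : Fˣ) : F) * x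
  have hf : Function.Injective f := fun a b h =>
    Subtype.ext (Units.ext (mul_right_cancel₀ hx h))
  let I : Finset F := Finset.univ.image f
  have hI0 : (0 : F) ∉ I := by
    simp [I, f, hx]
  let J : Finset F := insert 0 I
  have hIc : I.card = Fintype.card A := by
    rw [Finset.card_image_of_injective _ hf, Finset.card_univ]
  have hJc : J.card = Fintype.card A + 1 := by
    rw [Finset.card_insert_of_notMem hI0, hIc]
  have hJcc : (Jᶜ.card : ℝ) = (Fintype.card F : ℝ) - 1 - Fintype.card A := by
    have := Finset.card_add_card_compl J
    rw [hJc] at this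
    have h' : ((Fintype.card A + 1 + Jᶜ.card : ℕ) : ℝ) = Fintype.card F := by rw [this]
    push_cast at h'
    linarith
  have hsum : ∑ z ∈ Jᶜ, S z = -(Fintype.card A * (1 + S x)) := by
    have h1 := Finset.sum_add_sum_compl J S
    rw [hS, tcs_sum, ← hS, Finset.sum_insert hI0,
      Finset.sum_image (fun a _ b _ h => hf h)] at h1
    have h2 : ∀ a : A, S (f a) = S x := fun a => tcs_smul p F A x a
    simp_rw [h2] at h1
    rw [hS, tcs_zero, ← hS] at h1
    simp at h1
    linear_combination h1
  have hsq : ∑ z ∈ Jᶜ, ‖S z‖ ^ 2 = (Fintype.card F : ℝ) * Fintype.card A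
      - (Fintype.card A : ℝ) ^ 2 - Fintype.card A * ‖S x‖ ^ 2 := by
    have h1 := Finset.sum_add_sum_compl J (fun z => ‖S z‖ ^ 2)
    rw [hS, tcs_sq, ← hS, Finset.sum_insert hI0,
      Finset.sum_image (fun a _ b _ h => hf h)] at h1
    have h2 : ∀ a : A, S (f a) = S x := fun a => tcs_smul p F A x a
    simp_rw [h2] at h1
    rw [hS, tcs_zero, ← hS] at h1
    simp at h1
    linear_combination h1
  rw [← hsq, ← hJcc]
  have h3 : (Fintype.card A : ℝ) ^ 2 * ‖1 + S x‖ ^ 2 = ‖∑ z ∈ Jᶜ, S z‖ ^ 2 := by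
    rw [hsum, norm_neg, norm_mul, mul_pow]; simp
  rw [h3]
  calc ‖∑ z ∈ Jᶜ, S z‖ ^ 2 ≤ (∑ z ∈ Jᶜ, ‖S z‖) ^ 2 := by
        gcongr; exact norm_sum_le _ _
    _ ≤ _ := sq_sum_le_card_mul_sum_sq
end

/-- Theorem 6 (general `κ`, finite fields). Let `n = p^r`, `m ∣ n - 1` with
`κ = (n-1)/m`, and `A` the unique subgroup of `𝔽_{p^r}ˣ` of order `m`. The coherence
`μ = max_{x ≠ 0} (1/m)|∑_{a ∈ A} ω^{Tr(ax)}|` satisfies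
`μ ≤ (1/κ)((κ-1)√((1/m)(κ + 1/m)) + 1/m)`. -/
theorem finite_field_frame_coherence_bound (p r : ℕ) [Fact p.Prime] (hr : 0 < r)
    (F : Type*) [Field F] [Fintype F] [Algebra (ZMod p) F]
    (hF : Fintype.card F = p ^ r)
    (m κ : ℕ) (hκ : m * κ = p ^ r - 1)
    (A : Subgroup Fˣ) [Fintype A] (hA : Nat.card A = m) :
    ∀ x : F, x ≠ 0 →
      (1 / (m : ℝ)) * ‖traceCharSum p F A x‖ ≤
        (1 / (κ : ℝ)) * (((κ : ℝ) - 1) *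
            Real.sqrt ((1 / (m : ℝ)) * ((κ : ℝ) + 1 / (m : ℝ))) + 1 / (m : ℝ)) := by
  intro x hx
  have hmain := tcs_main p F A x hx
  have hn2 : 2 ≤ p ^ r := by
    rw [← hF]; exact Fintype.one_lt_card
  have hmA : Fintype.card A = m := by rw [← hA, Nat.card_eq_fintype_card]
  have hn : (Fintype.card F : ℝ) = m * κ + 1 := by
    have : Fintype.card F = m * κ + 1 := by rw [hF]; omega
    rw [this]; push_cast; ring
  have hmk : 0 < m * κ := by omega
  have hm : (0 : ℝ) < m := by exact_mod_cast Nat.pos_of_mul_pos_right hmk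
  have hk : (1 : ℝ) ≤ κ := by exact_mod_cast Nat.pos_of_mul_pos_left hmk
  rw [hmA, hn] at hmain
  set t := ‖traceCharSum p F A x‖ with ht
  have htri : (t - 1) ^ 2 ≤ ‖1 + traceCharSum p F A x‖ ^ 2 := by
    rw [sq_le_sq, abs_of_nonneg (norm_nonneg (1 + traceCharSum p F A x))]
    have h := abs_norm_sub_norm_le (traceCharSum p F A x) (-1)
    rw [norm_neg, norm_one, sub_neg_eq_add, add_comm _ (1 : ℂ)] at h
    exact h
  set n : ℝ := m * κ + 1 with hnd
  have hsqrt : Real.sqrt ((1 / (m : ℝ)) * ((κ : ℝ) + 1 / (m : ℝ))) = Real.sqrt n / m := by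
    have : (1 / (m : ℝ)) * ((κ : ℝ) + 1 / (m : ℝ)) = n / (m : ℝ) ^ 2 := by
      rw [hnd]; field_simp
    rw [this, Real.sqrt_div' _ (by positivity), Real.sqrt_sq hm.le]
  have hn0 : 0 ≤ n := by positivity
  have hs := Real.sq_sqrt hn0
  have hs0 := Real.sqrt_nonneg n
  have h1 : (m : ℝ) ^ 2 * (t - 1) ^ 2 ≤ (m : ℝ) ^ 2 * ((κ - 1) * (n - m - t ^ 2)) := by
    calc (m : ℝ) ^ 2 * (t - 1) ^ 2 ≤ (m : ℝ) ^ 2 * ‖1 + traceCharSum p F A x‖ ^ 2 := by gcongr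
      _ ≤ _ := hmain
      _ = _ := by rw [hnd]; ring
  have h2 : (t - 1) ^ 2 ≤ (κ - 1) * (n - m - t ^ 2) :=
    le_of_mul_le_mul_left h1 (by positivity)
  have h3 : (κ * t - 1) ^ 2 ≤ ((κ - 1) * Real.sqrt n) ^ 2 := by
    rw [mul_pow, hs]
    have h4 := mul_le_mul_of_nonneg_left h2 (by linarith : (0 : ℝ) ≤ κ)
    rw [hnd] at h4 ⊢
    linarith
  have h5 : κ * t - 1 ≤ (κ - 1) * Real.sqrt n :=
    le_trans (le_abs_self _) (abs_le_of_sq_le_sq h3 (mul_nonneg (by linarith) hs0))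
  rw [hsqrt]
  have hk0 : (0 : ℝ) < κ := by linarith
  have h6 : (1 / (κ : ℝ)) * (((κ : ℝ) - 1) * (Real.sqrt n / m) + 1 / (m : ℝ))
      = (1 / (m : ℝ)) * ((((κ : ℝ) - 1) * Real.sqrt n + 1) / κ) := by
    field_simp
  rw [h6]
  apply mul_le_mul_of_nonneg_left _ (by positivity)
  rw [le_div_iff₀ hk0]
  linarith
end

section
/- Let p be an odd prime, r a positive integer, n = p^r, m an odd divisor of n−1, A the unique subgroup of order m of 𝔽_{p^r}ˣ, ω = e^{2πi/p}, Tr : 𝔽_{p^r} → 𝔽_p the field trace, and κ := (n−1)/m. Then the coherence μ := max over nonzero x ∈ 𝔽_{p^r} of (1/m)|Σ_{a ∈ A} ω^{Tr(a x)}| satisfies μ ≤ (1/κ)·√( (1/m + (κ/2 − 1)·β)² + (κ/2)²·β² ), where β = √((1/m)(κ + 1/m)). -/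
theorem tcs_aux {F : Type*} [Field F] [Fintype F] [DecidableEq F] (h2 : (-1 : F) ≠ 1)
    (ψ : AddChar F ℂ) (hψ : ψ.IsPrimitive)
    (A : Subgroup Fˣ) [Fintype A] (m κ : ℕ) (hm : Odd m) (hA : Fintype.card A = m)
    (hn : m * κ + 1 = Fintype.card F) (S : F → ℂ)
    (hS : ∀ z, S z = ∑ a : A, ψ (((a : Fˣ) : F) * z)) (x : F) (hx : x ≠ 0) :
    (2 : ℝ) ≤ κ ∧ ((S x).im) ^ 2 ≤ (Fintype.card F : ℝ) / 4 ∧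
      ((κ : ℝ) * (S x).re + 1) ^ 2 ≤ ((κ : ℝ) / 2 - 1) ^ 2 * Fintype.card F := by
  have hmpos : 0 < m := hm.pos
  have hsum : ∀ c : F, ∑ z, ψ (c * z) = if c = 0 then (Fintype.card F : ℂ) else 0 := by
    intro c
    have := AddChar.sum_mulShift c hψ
    simp only [mul_comm c]
    rw [this]
    split_ifs <;> simp
  have hneg : ∀ a b : A, (((a : Fˣ) : F)) + ((b : Fˣ) : F) ≠ 0 := by
    intro a b h
    have h1 : ((b⁻¹ * a : A) : Fˣ) = -1 := by
      ext
      have hb : (((b : Fˣ) : F)) ≠ 0 := Units.ne_zero _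
      push_cast
      field_simp
      linear_combination h
    have h3 : (b⁻¹ * a) ^ m = 1 := by rw [← hA]; exact pow_card_eq_one
    have h4 : ((b⁻¹ * a : A) : Fˣ) ^ m = 1 := by exact_mod_cast congrArg Subtype.val h3
    rw [h1, hm.neg_one_pow] at h4
    apply h2
    simpa using congrArg Units.val h4
  -- conjugation
  have hconj : ∀ z, ψ (-z) = (starRingEnd ℂ) (ψ z) := fun z => AddChar.map_neg_eq_conj ψ z
  have hSneg : ∀ z, S (-z) = (starRingEnd ℂ) (S z) := by
    intro z
    rw [hS, hS, map_sum]
    exact Finset.sum_congr rfl fun a _ => by rw [mul_neg, hconj]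
  have hSinv : ∀ (b : A) z, S (((b : Fˣ) : F) * z) = S z := by
    intro b z
    rw [hS, hS]
    refine Fintype.sum_equiv (Equiv.mulRight b) _ _ fun a => ?_
    simp [mul_assoc]
  have hS0 : S 0 = m := by
    rw [hS]; simp [hA]
  have hT1 : ∑ z, S z = 0 := by
    simp only [hS]
    rw [Finset.sum_comm]
    refine Finset.sum_eq_zero fun a _ => ?_
    rw [hsum, if_neg (Units.ne_zero _)]
  have hT2 : ∑ z, S z * S z = 0 := by
    simp only [hS, Finset.sum_mul_sum]
    rw [Finset.sum_comm]
    refine Finset.sum_eq_zero fun a _ => ?_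
    rw [Finset.sum_comm]
    refine Finset.sum_eq_zero fun b _ => ?_
    simp only [← AddChar.map_add_eq_mul, ← add_mul]
    rw [hsum, if_neg (hneg a b)]
  have hT3 : ∑ z, S z * S (-z) = Fintype.card F * m := by
    simp only [hS, Finset.sum_mul_sum]
    rw [Finset.sum_comm]
    have : ∀ a : A, ∑ z, ∑ b : A, ψ (((a : Fˣ) : F) * z) * ψ (((b : Fˣ) : F) * -z)
        = Fintype.card F := by
      intro a
      rw [Finset.sum_comm]
      have : ∀ b : A, ∑ z, ψ (((a : Fˣ) : F) * z) * ψ (((b : Fˣ) : F) * -z)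
          = if a = b then (Fintype.card F : ℂ) else 0 := by
        intro b
        simp only [← AddChar.map_add_eq_mul, mul_neg, ← sub_eq_add_neg, ← sub_mul]
        rw [hsum]
        simp [sub_eq_zero, Units.val_inj]
      simp only [this]
      simp
    simp only [this]
    simp [hA, mul_comm]
  set n : ℝ := (Fintype.card F : ℝ) with hndef
  have hR1 : ∑ z, (S z).re = 0 := by
    have := congrArg Complex.re hT1
    simpa using this
  have hR2 : ∑ z, ((S z).re ^ 2 - (S z).im ^ 2) = 0 := by
    have := congrArg Complex.re hT2
    simpa [sq] using this
  have hR3 : ∑ z, ((S z).re ^ 2 + (S z).im ^ 2) = n * m := by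
    have := congrArg Complex.re hT3
    simpa [sq, hSneg] using this
  rw [Finset.sum_sub_distrib] at hR2
  rw [Finset.sum_add_distrib] at hR3
  -- orbit
  set O1 : Finset F := Finset.univ.image (fun a : A => ((a : Fˣ) : F) * x) with hO1
  set O2 : Finset F := Finset.univ.image (fun a : A => -(((a : Fˣ) : F) * x)) with hO2
  have hc1 : O1.card = m := by
    rw [hO1, Finset.card_image_of_injective, Finset.card_univ, hA]
    intro a b h
    simpa [hx, Units.val_inj] using h
  have hc2 : O2.card = m := by
    rw [hO2, Finset.card_image_of_injective, Finset.card_univ, hA]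
    intro a b h
    simpa [hx, Units.val_inj] using h
  have hdis : Disjoint O1 O2 := by
    rw [Finset.disjoint_left]
    intro y h1 h2
    simp only [hO1, hO2, Finset.mem_image, Finset.mem_univ, true_and] at h1 h2
    obtain ⟨a, rfl⟩ := h1
    obtain ⟨b, hb⟩ := h2
    apply hneg a b
    have : (((a : Fˣ) : F) + ((b : Fˣ) : F)) * x = 0 := by linear_combination -hb
    simpa [hx] using this
  have hval : ∀ y ∈ O1 ∪ O2, (S y).re = (S x).re ∧ (S y).im ^ 2 = (S x).im ^ 2 := by
    intro y hy
    simp only [Finset.mem_union, hO1, hO2, Finset.mem_image, Finset.mem_univ, true_and] at hy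
    rcases hy with ⟨a, rfl⟩ | ⟨a, rfl⟩
    · rw [hSinv]; simp
    · rw [hSneg, hSinv]; simp
  have h0 : (0 : F) ∉ O1 ∪ O2 := by
    simp [hO1, hO2, hx]
  have hcO : (O1 ∪ O2).card = 2 * m := by
    rw [Finset.card_union_of_disjoint hdis, hc1, hc2]; ring
  set O := O1 ∪ O2 with hO
  set P := insert (0 : F) O with hP
  have hcP : P.card = 2 * m + 1 := by rw [hP, Finset.card_insert_of_notMem h0, hcO]
  have hsplit : ∀ f : F → ℝ, ∑ z, f z = f 0 + ∑ z ∈ O, f z + ∑ z ∈ Pᶜ, f z := by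
    intro f
    rw [← Finset.sum_add_sum_compl P, hP, Finset.sum_insert h0]
  have hcU : (Pᶜ.card : ℝ) = m * (κ - 2) := by
    have h1 := Finset.card_add_card_compl P
    rw [hcP, ← hn] at h1
    have : ((2 * m + 1 + Pᶜ.card : ℕ) : ℝ) = ((m * κ + 1 : ℕ) : ℝ) := by rw [h1]
    push_cast at this
    linarith
  have hmR : (0 : ℝ) < m := by exact_mod_cast hmpos
  have hk2 : (2 : ℝ) ≤ κ := by
    have : (0 : ℝ) ≤ m * (κ - 2) := by rw [← hcU]; positivity
    have := nonneg_of_mul_nonneg_right this hmR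
    linarith
  have hnR : n = m * κ + 1 := by rw [hndef, ← hn]; push_cast; ring
  refine ⟨hk2, ?_, ?_⟩
  · have h1 : ∑ z ∈ O, (S z).im ^ 2 = 2 * m * (S x).im ^ 2 := by
      rw [Finset.sum_congr rfl fun z hz => (hval z hz).2]
      simp [hcO]
    have h2 : ∑ z ∈ O, (S z).im ^ 2 ≤ ∑ z, (S z).im ^ 2 :=
      Finset.sum_le_sum_of_subset_of_nonneg (Finset.subset_univ _) fun _ _ _ => sq_nonneg _
    rw [h1] at h2
    have : (m : ℝ) * (2 * (S x).im ^ 2) ≤ m * (n / 2) := by linarith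
    have := le_of_mul_le_mul_left this hmR
    linarith
  · set c := (S x).re with hc
    have h1 : ∑ z ∈ O, (S z).re = 2 * m * c := by
      rw [Finset.sum_congr rfl fun z hz => (hval z hz).1]
      simp [hcO]
    have h2 : ∑ z ∈ O, (S z).re ^ 2 = 2 * m * c ^ 2 := by
      rw [Finset.sum_congr rfl fun z hz => by rw [(hval z hz).1]]
      simp [hcO]
    have h3 := hsplit fun z => (S z).re
    have h4 := hsplit fun z => (S z).re ^ 2
    simp only [hS0, Complex.natCast_re, h1, h2] at h3 h4
    have h5 : (∑ z ∈ Pᶜ, (S z).re) ^ 2 ≤ Pᶜ.card * ∑ z ∈ Pᶜ, (S z).re ^ 2 :=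
      sq_sum_le_card_mul_sum_sq
    have h6 : ∑ z ∈ Pᶜ, (S z).re = -(m * (1 + 2 * c)) := by linarith
    have h7 : ∑ z ∈ Pᶜ, (S z).re ^ 2 = m * (n / 2 - m - 2 * c ^ 2) := by linarith
    rw [h6, h7, hcU] at h5
    have h8 : (m : ℝ) ^ 2 * (1 + 2 * c) ^ 2 ≤ m ^ 2 * ((κ - 2) * (n / 2 - m - 2 * c ^ 2)) := by
      linarith
    have h9 := le_of_mul_le_mul_left h8 (by positivity)
    have h10 := mul_le_mul_of_nonneg_left h9 (by linarith : (0 : ℝ) ≤ κ / 2)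
    rw [hnR] at h10 ⊢
    nlinarith

/-- Theorem 6 (`p`, `m` odd, finite fields). Let `p` be an odd prime, `n = p^r`, `m` an
odd divisor of `n - 1` with `κ = (n-1)/m`, and `A` the unique subgroup of `𝔽_{p^r}ˣ` of
order `m`. The coherence `μ = max_{x ≠ 0} (1/m)|∑_{a ∈ A} ω^{Tr(ax)}|` satisfies
`μ ≤ (1/κ)√((1/m + (κ/2 - 1)β)² + (κ/2)²β²)` with `β = √((1/m)(κ + 1/m))`. -/
theorem finite_field_frame_coherence_bound_odd (p r : ℕ) [Fact p.Prime] (hp : Odd p)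
    (hr : 0 < r)
    (F : Type*) [Field F] [Fintype F] [Algebra (ZMod p) F]
    (hF : Fintype.card F = p ^ r)
    (m κ : ℕ) (hm_odd : Odd m) (hκ : m * κ = p ^ r - 1)
    (A : Subgroup Fˣ) [Fintype A] (hA : Nat.card A = m) :
    ∀ x : F, x ≠ 0 →
      (1 / (m : ℝ)) * ‖traceCharSum p F A x‖ ≤
        (1 / (κ : ℝ)) * Real.sqrt
          ((1 / (m : ℝ) + ((κ : ℝ) / 2 - 1) *
              Real.sqrt ((1 / (m : ℝ)) * ((κ : ℝ) + 1 / (m : ℝ)))) ^ 2 +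
            ((κ : ℝ) / 2) ^ 2 *
              Real.sqrt ((1 / (m : ℝ)) * ((κ : ℝ) + 1 / (m : ℝ))) ^ 2) := by
  classical
  intro x hx
  have hpp : p.Prime := Fact.out
  have hp0 : p ≠ 0 := hpp.ne_zero
  have : NeZero p := ⟨hp0⟩
  have hζ : IsPrimitiveRoot (Complex.exp (2 * Real.pi * Complex.I / p)) p :=
    Complex.isPrimitiveRoot_exp p hp0
  have : CharP F p := charP_of_injective_algebraMap (algebraMap (ZMod p) F).injective p
  have h2 : (-1 : F) ≠ 1 := by
    apply Ring.neg_one_ne_one_of_char_ne_two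
    rw [ringChar.eq F p]
    rintro rfl
    exact absurd hp (by decide)
  let χ : AddChar (ZMod p) ℂ := AddChar.zmodChar p hζ.pow_eq_one
  let ψ : AddChar F ℂ := χ.compAddMonoidHom (Algebra.trace (ZMod p) F).toAddMonoidHom
  have hψa : ∀ z, ψ z = Complex.exp (2 * Real.pi * Complex.I / p) ^
      (Algebra.trace (ZMod p) F z).val := fun z => AddChar.zmodChar_apply hζ.pow_eq_one _
  have hψ : ψ.IsPrimitive := by
    apply AddChar.IsPrimitive.of_ne_one
    intro h
    have hprim : χ.IsPrimitive := AddChar.zmodChar_primitive_of_primitive_root p hζ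
    obtain rfl : ringChar F = p := ringChar.eq F p
    obtain ⟨b, hb⟩ := FiniteField.trace_to_zmod_nondegenerate F (one_ne_zero : (1 : F) ≠ 0)
    rw [one_mul] at hb
    exact hb ((hprim.zmod_char_eq_one_iff _ _).mp (DFunLike.congr_fun h b))
  have hn1 : 1 ≤ p ^ r := Nat.one_le_pow _ _ hpp.pos
  obtain ⟨hk, him, hre⟩ := tcs_aux h2 ψ hψ A m κ hm_odd (by rw [← hA, Nat.card_eq_fintype_card])
    (by rw [hF, hκ]; omega) (traceCharSum p F A) (fun z => by simp only [traceCharSum, hψa]) x hx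
  have hnR : (Fintype.card F : ℝ) = m * κ + 1 := by
    have : Fintype.card F = m * κ + 1 := by rw [hF, hκ]; omega
    rw [this]; push_cast; ring
  rw [hnR] at him hre
  have hmR : (0 : ℝ) < m := by exact_mod_cast hm_odd.pos
  have hkR : (0 : ℝ) < κ := by linarith
  set S := traceCharSum p F A x with hSdef
  set N : ℝ := m * κ + 1 with hN
  have hN0 : 0 ≤ N := by positivity
  have hβ : Real.sqrt ((1 / (m : ℝ)) * ((κ : ℝ) + 1 / (m : ℝ))) = Real.sqrt N / m := by
    rw [show (1 / (m : ℝ)) * ((κ : ℝ) + 1 / (m : ℝ)) = N / m ^ 2 by rw [hN]; field_simp,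
      Real.sqrt_div hN0, Real.sqrt_sq hmR.le]
  rw [hβ]
  set t := Real.sqrt N with ht
  have ht2 : t ^ 2 = N := Real.sq_sqrt hN0
  have ht0 : 0 ≤ t := Real.sqrt_nonneg _
  have e1 : |(κ : ℝ) * S.re + 1| ≤ (κ / 2 - 1) * t := by
    apply abs_le_of_sq_le_sq _ (mul_nonneg (by linarith) ht0)
    rw [mul_pow, ht2]; exact hre
  have e2 : ((κ : ℝ) * S.re) ^ 2 ≤ (1 + (κ / 2 - 1) * t) ^ 2 := by
    rw [abs_le] at e1
    apply sq_le_sq'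
    · linarith
    · linarith
  rw [show (1 / (m : ℝ) + ((κ : ℝ) / 2 - 1) * (t / m)) ^ 2 + ((κ : ℝ) / 2) ^ 2 * (t / m) ^ 2
    = ((1 + (κ / 2 - 1) * t) ^ 2 + (κ / 2) ^ 2 * t ^ 2) / m ^ 2 by field_simp,
    Real.sqrt_div (by positivity), Real.sqrt_sq hmR.le]
  have e3 : (κ : ℝ) * ‖S‖ ≤ Real.sqrt ((1 + (κ / 2 - 1) * t) ^ 2 + (κ / 2) ^ 2 * t ^ 2) := by
    apply Real.le_sqrt_of_sq_le
    rw [mul_pow, Complex.sq_norm, Complex.normSq_apply, ht2]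
    have := mul_le_mul_of_nonneg_left him (sq_nonneg (κ : ℝ))
    nlinarith
  rw [show (1 / (m : ℝ)) * ‖S‖ = (κ * ‖S‖) / (κ * m) by field_simp,
    one_div_mul_eq_div, div_div, mul_comm (m : ℝ)]
  gcongr
end

section
/- Let p be a prime with p ≡ 3 (mod 4), r an odd positive integer, n = p^r, m = (n−1)/2, and A the unique subgroup of order m of 𝔽_{p^r}ˣ (the group of nonzero squares). Let ω = e^{2πi/p} and Tr : 𝔽_{p^r} → 𝔽_p the field trace. Then for every nonzero z ∈ 𝔽_{p^r}, the normalized inner product satisfies (1/m)|Σ_{a ∈ A} ω^{Tr(a z)}| = √((n − m)/(m(n − 1))); that is, the columns of the frame matrix M = [ω^{Tr(a_i x_j)}]_{i=1..m, j=1..n} form a tight equiangular frame whose coherence meets the Welch lower bound, and whose entries are p-th roots of unity. -/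
/-- A subgroup of order `(n-1)/2` consists exactly of the units with quadratic character `1`. -/
lemma mem_iff_quadChar (F : Type*) [Field F] [Fintype F] [DecidableEq F] (hF2 : ringChar F ≠ 2)
    (m : ℕ) (hm : 2 * m + 1 = Fintype.card F) (A : Subgroup Fˣ) (hA : Nat.card A = m)
    (a : Fˣ) : a ∈ A ↔ quadraticChar F (a : F) = 1 := by
  have hm0 : 0 < m := by
    have := Fintype.one_lt_card (α := F)
    omega
  have hdiv : Fintype.card F / 2 = m := by omega
  classical
  have hsub : (A : Set Fˣ).toFinset ⊆ Finset.univ.filter (fun x : Fˣ => x ^ m = 1) := by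
    intro x hx
    have hx : x ∈ A := by simpa using hx
    have h1 : (⟨x, hx⟩ : A) ^ m = 1 := by rw [← hA]; exact pow_card_eq_one'
    simpa [Subtype.ext_iff] using h1
  have heq := Finset.eq_of_subset_of_card_le hsub (by
    refine (IsCyclic.card_pow_eq_one_le hm0).trans ?_
    rw [Set.toFinset_card, ← Nat.card_eq_fintype_card]
    exact hA.ge)
  have h2 : a ∈ A ↔ a ^ m = 1 := by
    have := Finset.ext_iff.mp heq a
    simpa using this
  rw [h2, quadraticChar_one_iff_isSquare a.ne_zero, FiniteField.isSquare_iff hF2 a.ne_zero, hdiv,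
    ← Units.val_pow_eq_pow_val, Units.val_eq_one]

/-- Corollary 1. Let `p ≡ 3 (mod 4)` be a prime, `r` odd, `n = p^r`, `m = (n-1)/2`, and
`A` the unique subgroup of `𝔽_{p^r}ˣ` of order `m` (the nonzero squares). Then for every
`z ≠ 0`, `(1/m)|∑_{a ∈ A} ω^{Tr(az)}| = √((n-m)/(m(n-1)))`: the columns of
`M = [ω^{Tr(aᵢ xⱼ)}]` form a tight equiangular frame meeting the Welch bound, whose
entries are `p`-th roots of unity. -/
theorem paley_tight_equiangular_frame (p r : ℕ) [Fact p.Prime] (hp : p % 4 = 3)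
    (hr_odd : Odd r) (hr : 0 < r)
    (F : Type*) [Field F] [Fintype F] [Algebra (ZMod p) F]
    (n : ℕ) (hn : n = p ^ r) (hF : Fintype.card F = n)
    (m : ℕ) (hm : 2 * m = n - 1)
    (A : Subgroup Fˣ) [Fintype A] (hA : Nat.card A = m) :
    (∀ z : F, z ≠ 0 →
      (1 / (m : ℝ)) * ‖traceCharSum p F A z‖ =
        Real.sqrt (((n : ℝ) - m) / ((m : ℝ) * ((n : ℝ) - 1)))) ∧
    (∀ (a : Fˣ) (x : F),
      (Complex.exp (2 * Real.pi * Complex.I / p) ^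
          (Algebra.trace (ZMod p) F (((a : F)) * x)).val) ^ p = 1) := by
  have hpp : p.Prime := Fact.out
  have hp0 : p ≠ 0 := hpp.ne_zero
  set ζ : ℂ := Complex.exp (2 * Real.pi * Complex.I / p) with hζdef
  have hζ : IsPrimitiveRoot ζ p := Complex.isPrimitiveRoot_exp p hp0
  refine ⟨?_, fun a x => by rw [← pow_mul, mul_comm, pow_mul, hζ.pow_eq_one, one_pow]⟩
  intro z hz
  classical
  haveI : NeZero p := ⟨hp0⟩
  have hn4 : n % 4 = 3 := by
    obtain ⟨k, rfl⟩ := hr_odd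
    rw [hn, pow_succ, pow_mul, Nat.mul_mod, Nat.pow_mod, Nat.pow_mod p, hp]
    norm_num
  have hF2 : ringChar F ≠ 2 := by
    intro h
    have := FiniteField.even_card_of_char_two h
    omega
  have hmem := mem_iff_quadChar F hF2 m (by omega) A hA
  -- the additive character
  let ψ₀ : AddChar (ZMod p) ℂ := AddChar.zmodChar p hζ.pow_eq_one
  let ψ : AddChar F ℂ := ψ₀.compAddMonoidHom (Algebra.trace (ZMod p) F).toAddMonoidHom
  let φ : AddChar F ℂ := ψ.mulShift z
  have hφ : ∀ x, φ x = ζ ^ (Algebra.trace (ZMod p) F (x * z)).val := by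
    intro x
    simp [φ, ψ, ψ₀, AddChar.mulShift_apply, AddChar.zmodChar_apply, mul_comm]
  have hφ1 : φ ≠ 1 := by
    intro h
    have hsurj := Algebra.trace_surjective (ZMod p) F
    obtain ⟨y, hy⟩ := hsurj 1
    have h1 := hφ (y / z)
    rw [div_mul_cancel₀ _ hz, hy, h, ZMod.val_one'' hpp.one_lt.ne', pow_one] at h1
    exact hζ.ne_one hpp.one_lt (by simpa using h1.symm)
  have hprim : φ.IsPrimitive := AddChar.IsPrimitive.of_ne_one hφ1
  let χ : MulChar F ℂ := (quadraticChar F).ringHomComp (Int.castRingHom ℂ)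
  have hχ1 : χ ≠ 1 := by
    rw [Ne, MulChar.ringHomComp_eq_one_iff (Int.cast_injective)]
    exact quadraticChar_ne_one hF2
  have hχq : χ.IsQuadratic := (quadraticChar_isQuadratic F).comp _
  have hG := gaussSum_sq hχ1 hχq hprim
  have hneg : χ (-1) = -1 := by
    simp only [χ, MulChar.ringHomComp_apply]
    rw [quadraticChar_neg_one hF2, hF, ZMod.χ₄_nat_three_mod_four hn4]
    simp
  rw [hneg, hF] at hG
  set G := gaussSum χ φ with hGdef
  have hsum : ∑ x : F, φ x = 0 := AddChar.sum_eq_zero_of_ne_one hφ1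
  have hS : 2 * traceCharSum p F A z = G - 1 := by
    have e1 : traceCharSum p F A z = ∑ x : F, if quadraticChar F x = 1 then φ x else 0 := by
      rw [traceCharSum, ← Finset.sum_filter]
      refine Finset.sum_bij (fun a _ => ((a : Fˣ) : F)) ?_ ?_ ?_ ?_
      · intro a _
        simpa using (hmem a).1 a.2
      · intro a _ b _ h
        exact Subtype.ext (Units.ext h)
      · intro x hx
        have hx : quadraticChar F x = 1 := by simpa using hx
        have hx0 : x ≠ 0 := by
          rintro rfl
          simp at hx
        exact ⟨⟨Units.mk0 x hx0, (hmem _).2 hx⟩, Finset.mem_univ _, rfl⟩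
      · intro a _
        rw [hφ]
    have e2 : ∀ x : F, 2 * (if quadraticChar F x = 1 then φ x else 0) =
        χ x * φ x + φ x - (if x = 0 then 1 else 0) := by
      intro x
      by_cases hx : x = 0
      · subst hx
        simp [χ]
      · rcases quadraticChar_dichotomy hx with h | h
        · simp [χ, h, hx]; ring
        · simp [χ, h, hx]
    rw [e1, Finset.mul_sum, Finset.sum_congr rfl (fun x _ => e2 x), Finset.sum_sub_distrib,
      Finset.sum_add_distrib, hsum]
    simp [hGdef, gaussSum]
  -- norm computation
  have hre : G.re * G.re - G.im * G.im = -(n : ℝ) := by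
    have := congrArg Complex.re hG
    simpa [pow_two] using this
  have him : G.re * G.im + G.im * G.re = 0 := by
    have := congrArg Complex.im hG
    simpa [pow_two] using this
  have hmn : (n : ℝ) = 2 * m + 1 := by
    have : n = 2 * m + 1 := by omega
    rw [this]; push_cast; ring
  have hm0 : (0 : ℝ) < m := by
    have : 0 < m := by omega
    exact_mod_cast this
  have hre0 : G.re = 0 := by
    have h : G.re * G.im = 0 := by linarith
    rcases mul_eq_zero.mp h with h | h
    · exact h
    · rw [h] at hre
      nlinarith [mul_self_nonneg G.re]
  have hnorm : ‖traceCharSum p F A z‖ ^ 2 = ((n : ℝ) + 1) / 4 := by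
    have h1 : ‖2 * traceCharSum p F A z‖ ^ 2 = (n : ℝ) + 1 := by
      rw [hS, Complex.sq_norm, Complex.normSq_apply]
      simp [hre0]
      rw [hre0] at hre
      linarith
    rw [norm_mul, mul_pow] at h1
    norm_num at h1
    linarith
  symm
  rw [show ((n : ℝ) - m) / ((m : ℝ) * ((n : ℝ) - 1)) =
      ((1 / (m : ℝ)) * ‖traceCharSum p F A z‖) ^ 2 by
    rw [mul_pow, hnorm, hmn]
    field_simp
    ring]
  exact Real.sqrt_sq (by positivity)
end

section
/- Let G be a finite group of order n, and let χ_1, ..., χ_m be the characters of m pairwise non-isomorphic nontrivial irreducible complex representations of G, each of degree d. Then Σ over nonidentity g ∈ G of Σ_{t=1}^m χ_t(g) equals −md; consequently the average coherence ν := (1/(n−1)) · |Σ_{g ≠ 1} (1/(md)) Σ_{t=1}^m χ_t(g)| equals exactly 1/(n−1). Moreover, if n ≥ 2md, then 1/(n−1) ≤ (1/√(md)) · √((n − md)/(md(n − 1))). -/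
open Matrix

theorem sum_matrix_eq_zero {G : Type*} [Group G] [Fintype G] {d : ℕ}
    (ρ : G →* Matrix (Fin d) (Fin d) ℂ)
    (hirr : ∀ W : Submodule ℂ (Fin d → ℂ),
      (∀ g : G, ∀ v ∈ W, (ρ g).mulVec v ∈ W) → W = ⊥ ∨ W = ⊤)
    (hnontriv : ∃ g : G, ρ g ≠ 1) : ∑ g : G, ρ g = 0 := by
  let W : Submodule ℂ (Fin d → ℂ) :=
    { carrier := {v | ∀ g : G, (ρ g).mulVec v = v}
      add_mem' := by
        intro a b ha hb g
        rw [Matrix.mulVec_add, ha g, hb g]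
      zero_mem' := by
        intro g
        exact Matrix.mulVec_zero _
      smul_mem' := by
        intro c a ha g
        rw [Matrix.mulVec_smul, ha g] }
  have hW : ∀ v, v ∈ W ↔ ∀ g : G, (ρ g).mulVec v = v := fun v => Iff.rfl
  have hS : ∀ h : G, ρ h * ∑ g : G, ρ g = ∑ g : G, ρ g := by
    intro h
    rw [Finset.mul_sum]
    simp_rw [← map_mul]
    exact Fintype.sum_equiv (Equiv.mulLeft h) _ _ (fun g => rfl)
  rcases hirr W (by intro g v hv; rw [(hW v).1 hv g]; exact hv) with h | h
  · apply Matrix.toLin'.injective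
    apply LinearMap.ext
    intro v
    have : (∑ g : G, ρ g).mulVec v ∈ W := by
      rw [hW]
      intro g
      rw [Matrix.mulVec_mulVec, hS]
    rw [h, Submodule.mem_bot] at this
    rw [Matrix.toLin'_apply, this, map_zero, LinearMap.zero_apply]
  · exfalso
    obtain ⟨g, hg⟩ := hnontriv
    apply hg
    apply Matrix.toLin'.injective
    apply LinearMap.ext
    intro v
    have : v ∈ W := by rw [h]; trivial
    simpa using (hW v).1 this g

/-- Theorem (average coherence of group frames). Let `G` be a finite group of order `n`
and `ρ₁, …, ρ_m` pairwise non-isomorphic nontrivial irreducible complex representations of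
`G`, each of degree `d`, with characters `χ_t = Tr ∘ ρ_t`. Then
`∑_{g ≠ 1} ∑_t χ_t(g) = -m d`, so the average coherence
`ν = (1/(n-1)) |∑_{g ≠ 1} (1/(md)) ∑_t χ_t(g)|` equals `1/(n-1)`; moreover if `n ≥ 2md`
then `1/(n-1) ≤ (1/√(md)) √((n - md)/(md(n-1)))`. -/
theorem group_frame_average_coherence (G : Type*) [Group G] [Fintype G] [DecidableEq G]
    (n : ℕ) (hn : Fintype.card G = n) (m d : ℕ) (hm : 0 < m)
    (ρ : Fin m → (G →* Matrix (Fin d) (Fin d) ℂ))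
    (hirr : ∀ t : Fin m, ∀ W : Submodule ℂ (Fin d → ℂ),
      (∀ g : G, ∀ v ∈ W, (ρ t g).mulVec v ∈ W) → W = ⊥ ∨ W = ⊤)
    (hnontriv : ∀ t : Fin m, ∃ g : G, ρ t g ≠ 1)
    (hnoniso : ∀ t s : Fin m, t ≠ s →
      ¬ ∃ T : Matrix (Fin d) (Fin d) ℂ, IsUnit T ∧ ∀ g : G, T * ρ t g = ρ s g * T) :
    (∑ g ∈ Finset.univ.filter (fun g : G => g ≠ 1), ∑ t : Fin m, (ρ t g).trace
      = -((m : ℂ) * (d : ℂ))) ∧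
    ((1 / ((n : ℝ) - 1)) *
        ‖∑ g ∈ Finset.univ.filter (fun g : G => g ≠ 1),
            (1 / ((m : ℂ) * (d : ℂ))) * ∑ t : Fin m, (ρ t g).trace‖
      = 1 / ((n : ℝ) - 1)) ∧
    (2 * m * d ≤ n →
      1 / ((n : ℝ) - 1) ≤
        (1 / Real.sqrt ((m : ℝ) * d)) *
          Real.sqrt (((n : ℝ) - (m : ℝ) * d) / (((m : ℝ) * d) * ((n : ℝ) - 1)))) := by
  have hd : 0 < d := by
    obtain ⟨g, hg⟩ := hnontriv ⟨0, hm⟩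
    rcases Nat.eq_zero_or_pos d with h | h
    · subst h
      exact absurd (Subsingleton.elim _ _) hg
    · exact h
  have hmC : (m : ℂ) ≠ 0 := by exact_mod_cast hm.ne'
  have hdC : (d : ℂ) ≠ 0 := by exact_mod_cast hd.ne'
  have h1 : ∑ g ∈ Finset.univ.filter (fun g : G => g ≠ 1), ∑ t : Fin m, (ρ t g).trace
      = -((m : ℂ) * (d : ℂ)) := by
    have htot : ∑ g : G, ∑ t : Fin m, (ρ t g).trace = 0 := by
      rw [Finset.sum_comm]
      apply Finset.sum_eq_zero
      intro t _
      rw [← Matrix.trace_sum, sum_matrix_eq_zero (ρ t) (hirr t) (hnontriv t), Matrix.trace_zero]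
    rw [Finset.filter_ne', ← Finset.add_sum_erase _ _ (Finset.mem_univ (1 : G))] at *
    simp only [map_one, Matrix.trace_one, Fintype.card_fin, Finset.sum_const, Finset.card_univ,
      nsmul_eq_mul] at htot
    linear_combination htot
  refine ⟨h1, ?_, ?_⟩
  · rw [← Finset.mul_sum, h1]
    have : 1 / ((m : ℂ) * (d : ℂ)) * -((m : ℂ) * (d : ℂ)) = -1 := by
      field_simp
    rw [this, norm_neg, norm_one, mul_one]
  · intro h
    have hk : 1 ≤ m * d := Nat.mul_pos hm hd
    have hkR : (1 : ℝ) ≤ (m : ℝ) * d := by exact_mod_cast hk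
    have hnR : 2 * ((m : ℝ) * d) ≤ n := by
      rw [← mul_assoc]
      exact_mod_cast h
    generalize (m : ℝ) * d = k at hkR hnR ⊢
    generalize (n : ℝ) = x at hnR ⊢
    have hx : 0 < x - 1 := by linarith
    have hk0 : 0 < k := by linarith
    rw [← Real.sqrt_one, ← Real.sqrt_div zero_le_one, ← Real.sqrt_mul (by positivity),
      Real.sqrt_one]
    apply Real.le_sqrt_of_sq_le
    rw [div_pow, one_pow, div_mul_div_comm, one_mul, div_le_div_iff₀ (by positivity) (by positivity)]
    have : k * k ≤ (x - k) * (x - 1) :=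
      mul_le_mul (by linarith) (by linarith) hk0.le (by linarith)
    nlinarith [mul_le_mul_of_nonneg_right this hx.le]
end
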